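/- arXiv:2111.10851 — 3 statements merged into one kernel-verified Lean document; each statement's English description precedes it below -/
import Mathlib

section
/- If I is an ass-decomposable monomial ideal in R = K[x_1,…,x_n], then depth(R/I) = min{ dim R/𝔭 : 𝔭 ∈ ass(I) } = n − bigh(I), where bigh(I) is the maximum height of an associated prime of I. -/
open MvPolynomial

namespace Paper

/-- The depth of a module `M` with respect to an ideal `J`: the supremum of lengths of
`M`-regular sequences consisting of elements of `J`. -/
noncomputable def depth {A : Type} [CommRing A] (J : Ideal A)
    (M : Type) [AddCommGroup M] [Module A M] : ℕ∞ :=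
  sSup {k : ℕ∞ | ∃ rs : List A, (rs.length : ℕ∞) = k ∧ (∀ r ∈ rs, r ∈ J) ∧
    RingTheory.Sequence.IsRegular M rs}

/-- The irrelevant maximal ideal `𝔪 = (x_1, …, x_n)` of `K[x_1, …, x_n]`. -/
noncomputable def mIdeal (n : ℕ) (K : Type) [Field K] : Ideal (MvPolynomial (Fin n) K) :=
  Ideal.span (Set.range X)

/-- The Krull dimension of a module, `dim M = dim (A / ann M)`. -/
noncomputable def mdim (A : Type) [CommRing A] (M : Type) [AddCommGroup M] [Module A M] :
    WithBot ℕ∞ :=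
  ringKrullDim (A ⧸ Module.annihilator A M)

/-- A module over `K[x_1, …, x_n]` is Cohen-Macaulay if its depth with respect to the
irrelevant maximal ideal equals its Krull dimension. -/
def IsCMMod (n : ℕ) (K : Type) [Field K] (M : Type) [AddCommGroup M]
    [Module (MvPolynomial (Fin n) K) M] : Prop :=
  (depth (mIdeal n K) M : WithBot ℕ∞) = mdim (MvPolynomial (Fin n) K) M

/-- A module over `K[x_1, …, x_n]` is sequentially Cohen-Macaulay if it admits a finite
filtration `0 = M_0 ⊂ M_1 ⊂ ⋯ ⊂ M_r = M` with Cohen-Macaulay quotients of strictly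
increasing dimensions. -/
def IsSeqCMMod (n : ℕ) (K : Type) [Field K] (M : Type) [AddCommGroup M]
    [Module (MvPolynomial (Fin n) K) M] : Prop :=
  ∃ (r : ℕ) (f : Fin (r + 1) → Submodule (MvPolynomial (Fin n) K) M),
    f 0 = ⊥ ∧ f (Fin.last r) = ⊤ ∧ StrictMono f ∧
    (∀ i : Fin r,
      IsCMMod n K (↥(f i.succ) ⧸ Submodule.comap (f i.succ).subtype (f i.castSucc))) ∧
    ∀ i j : Fin r, i < j →
      mdim (MvPolynomial (Fin n) K)
          (↥(f i.succ) ⧸ Submodule.comap (f i.succ).subtype (f i.castSucc)) <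
        mdim (MvPolynomial (Fin n) K)
          (↥(f j.succ) ⧸ Submodule.comap (f j.succ).subtype (f j.castSucc))

/-- Height of an ideal (meaningful for prime ideals). -/
noncomputable def htP {A : Type} [CommRing A] (𝔭 : Ideal A) : ℕ∞ :=
  ⨆ (h : 𝔭.IsPrime), Order.height (⟨𝔭, h⟩ : PrimeSpectrum A)

/-- The big height of `I`: the maximum of the heights of the associated primes of `I`. -/
noncomputable def bigh {A : Type} [CommRing A] (I : Ideal A) : ℕ∞ :=
  ⨆ 𝔭 ∈ associatedPrimes A (A ⧸ I), htP 𝔭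

/-- A monomial ideal: an ideal generated by monomials. -/
def IsMonomialIdeal {n : ℕ} {K : Type} [Field K] (I : Ideal (MvPolynomial (Fin n) K)) : Prop :=
  ∃ S : Set (Fin n →₀ ℕ), I = Ideal.span ((fun a => monomial a (1 : K)) '' S)

/-- A squarefree monomial ideal: an ideal generated by squarefree monomials. -/
def IsSquarefreeMonomialIdeal {n : ℕ} {K : Type} [Field K]
    (I : Ideal (MvPolynomial (Fin n) K)) : Prop :=
  ∃ S : Set (Fin n →₀ ℕ), (∀ a ∈ S, ∀ i, a i ≤ 1) ∧
    I = Ideal.span ((fun a => monomial a (1 : K)) '' S)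

/-- An ideal `I` is unmixed if `dim A/I = dim A/𝔭` for every associated prime `𝔭` of `I`. -/
def IsUnmixed {A : Type} [CommRing A] (I : Ideal A) : Prop :=
  ∀ 𝔭 ∈ associatedPrimes A (A ⧸ I), ringKrullDim (A ⧸ I) = ringKrullDim (A ⧸ 𝔭)

/-- ass-decomposable ideals: `I` is ass-decomposable if it is primary, or there are a
variable `x_i ∉ √I` and `k ≥ 1` with `ass(I + (x_i^k)) = {𝔭 ∈ ass(I) : x_i ∈ 𝔭}` such
that `I + (x_i^k)` and `I : x_i^k` are both ass-decomposable. -/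
inductive IsAssDecomposable {n : ℕ} {K : Type} [Field K] :
    Ideal (MvPolynomial (Fin n) K) → Prop
  | primary {I : Ideal (MvPolynomial (Fin n) K)} (h : I.IsPrimary) : IsAssDecomposable I
  | step {I : Ideal (MvPolynomial (Fin n) K)} (i : Fin n) (k : ℕ) (hk : 1 ≤ k)
      (hx : X i ∉ I.radical)
      (hass : associatedPrimes (MvPolynomial (Fin n) K)
          (MvPolynomial (Fin n) K ⧸ (I + Ideal.span {(X i : MvPolynomial (Fin n) K) ^ k})) =
        {𝔭 ∈ associatedPrimes (MvPolynomial (Fin n) K) (MvPolynomial (Fin n) K ⧸ I) |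
          (X i : MvPolynomial (Fin n) K) ∈ 𝔭})
      (h1 : IsAssDecomposable (I + Ideal.span {(X i : MvPolynomial (Fin n) K) ^ k}))
      (h2 : IsAssDecomposable (I.colon (Ideal.span {(X i : MvPolynomial (Fin n) K) ^ k}))) :
      IsAssDecomposable I

section ext
open CategoryTheory Abelian

variable {R : Type} [CommRing R]

/-- Vanishing of `Ext^i(N, M)` for `i < d`. -/
def ExtVan (N M : Type) [AddCommGroup N] [Module R N] [AddCommGroup M] [Module R M]
    (d : ℕ) : Prop :=
  ∀ i < d, Subsingleton (Ext (ModuleCat.of R N) (ModuleCat.of R M) i)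

lemma shortExact_of {M₁ M₂ M₃ : Type} [AddCommGroup M₁] [Module R M₁]
    [AddCommGroup M₂] [Module R M₂] [AddCommGroup M₃] [Module R M₃]
    (f : M₁ →ₗ[R] M₂) (g : M₂ →ₗ[R] M₃) (hf : Function.Injective f)
    (hg : Function.Surjective g) (h : Function.Exact f g) :
    (ModuleCat.shortComplexOfCompEqZero f g h.linearMap_comp_eq_zero).ShortExact where
  exact := ModuleCat.shortComplex_exact _ h
  mono_f := by simpa [ModuleCat.mono_iff_injective] using hf
  epi_g := by simpa [ModuleCat.epi_iff_surjective] using hg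

lemma extVan_of_exact {N M₁ M₂ M₃ : Type} [AddCommGroup N] [Module R N]
    [AddCommGroup M₁] [Module R M₁]
    [AddCommGroup M₂] [Module R M₂] [AddCommGroup M₃] [Module R M₃]
    (f : M₁ →ₗ[R] M₂) (g : M₂ →ₗ[R] M₃) (hf : Function.Injective f)
    (hg : Function.Surjective g) (h : Function.Exact f g) {d : ℕ}
    (h1 : ExtVan (R := R) N M₁ d) (h3 : ExtVan (R := R) N M₃ d) : ExtVan (R := R) N M₂ d := by
  intro i hi
  have hS := shortExact_of f g hf hg h
  have := h1 i hi
  have := h3 i hi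
  refine subsingleton_of_forall_eq 0 fun x => ?_
  obtain ⟨y, hy⟩ := Ext.covariant_sequence_exact₂ (ModuleCat.of R N) hS x
    (@Subsingleton.elim _ (h3 i hi) _ _)
  have : y = 0 := @Subsingleton.elim _ (h1 i hi) _ _
  rw [← hy, this, Ext.zero_comp]

lemma extVan_succ {N M M₃ : Type} [AddCommGroup N] [Module R N]
    [AddCommGroup M] [Module R M] [AddCommGroup M₃] [Module R M₃]
    (r : R) (hr : ∀ y : N, r • y = 0) (g : M →ₗ[R] M₃) (hreg : IsSMulRegular M r)
    (hg : Function.Surjective g) (h : Function.Exact (LinearMap.lsmul R M r) g) {d : ℕ}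
    (h3 : ExtVan (R := R) N M₃ d) : ExtVan (R := R) N M (d + 1) := by
  intro i hi
  have hS := shortExact_of (LinearMap.lsmul R M r) g hreg hg h
  refine subsingleton_of_forall_eq 0 fun x => ?_
  have key := Ext.postcomp_smul_id_eq_zero_of_mem_annihilator (M := ModuleCat.of R M)
    (N := ModuleCat.of R N) (r := r) (Module.mem_annihilator.mpr hr) i
  have hx : x.comp (Ext.mk₀ (r • 𝟙 (ModuleCat.of R M))) (add_zero i) = 0 :=
    congrArg (fun f => f.hom x) key
  match i, x, hx with
  | 0, x, hx =>
    have := hS.mono_f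
    refine Ext.postcomp_mk₀_injective_of_mono (ModuleCat.of R N) _ (hf := hS.mono_f) ?_
    rw [map_zero]
    exact hx
  | i + 1, x, hx =>
    obtain ⟨y, hy⟩ := Ext.covariant_sequence_exact₁ (ModuleCat.of R N) hS x hx rfl
    have : y = 0 := @Subsingleton.elim _ (h3 i (by omega)) _ _
    rw [← hy, this, Ext.zero_comp]

end ext

section upper
open Pointwise
variable {R : Type} [CommRing R] [IsNoetherianRing R]

lemma exists_assPrime_quot {M : Type} [AddCommGroup M] [Module R M] [Module.Finite R M]
    {p m : Ideal R} [m.IsPrime] (hp : p ∈ associatedPrimes R M) (hpm : p ≤ m) {x : R} (hx : x ∈ m)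
    (hreg : IsSMulRegular M x) :
    ∃ q ∈ associatedPrimes R (QuotSMulTop x M), p < q ∧ q ≤ m := by
  have hp' := (isAssociatedPrime_iff.mp hp)
  obtain ⟨hpp, u, hu⟩ := hp'
  have hpu : ∀ a, a ∈ p ↔ a • u = 0 := by
    intro a; rw [hu, Submodule.mem_colon_singleton, Submodule.mem_bot]
  have hu0 : u ≠ 0 := by
    rintro rfl
    exact hpp.ne_top ((Ideal.eq_top_iff_one _).2 ((hpu 1).2 (by simp)))
  have hxp : x ∉ p := fun h => hu0 (hreg (by simpa using (hpu x).1 h))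
  let U : Submodule R M := 
    { carrier := {y | ∀ a ∈ p, a • y = 0}
      add_mem' := fun {y z} hy hz a ha => by rw [smul_add, hy a ha, hz a ha, add_zero]
      zero_mem' := fun a _ => smul_zero a
      smul_mem' := fun c y hy a ha => by rw [smul_comm, hy a ha, smul_zero] }
  have huU : u ∈ U := fun a ha => (hpu a).1 ha
  have hann : Module.annihilator R U ≤ m := fun a ha => hpm ((hpu a).2 (by
    have := Module.mem_annihilator.1 ha ⟨u, huU⟩
    exact congrArg Subtype.val this))
  have hsupp : (⟨m, inferInstance⟩ : PrimeSpectrum R) ∈ Module.support R (QuotSMulTop x U) := by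
    rw [Module.support_quotSMulTop]
    refine ⟨?_, by simpa using hx⟩
    rw [Module.support_eq_zeroLocus]
    exact hann
  rw [Module.support_eq_zeroLocus] at hsupp
  have hsupp' : Module.annihilator R (QuotSMulTop x U) ≤ m := hsupp
  obtain ⟨q, hq, hqm⟩ := Ideal.exists_minimalPrimes_le hsupp'
  have hqa := Module.associatedPrimes.minimalPrimes_annihilator_subset_associatedPrimes R _ hq
  let φ : QuotSMulTop x U →ₗ[R] QuotSMulTop x M := QuotSMulTop.map x U.subtype
  have hφ : Function.Injective φ := by
    rw [injective_iff_map_eq_zero]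
    intro z hz
    obtain ⟨z, rfl⟩ := Submodule.mkQ_surjective _ z
    have hz' : (Submodule.mkQ (x • (⊤ : Submodule R M))) z = 0 := hz
    rw [Submodule.mkQ_apply, Submodule.Quotient.mk_eq_zero] at hz' ⊢
    obtain ⟨w, -, hw⟩ := hz'
    have hw' : x • w = z := hw
    refine ⟨⟨w, ?_⟩, trivial, Subtype.ext hw⟩
    intro a ha
    apply hreg
    change x • a • w = x • (0 : M)
    rw [smul_comm, hw', z.2 a ha, smul_zero]
  refine ⟨q, associatedPrimes.subset_of_injective hφ hqa, ?_, hqm⟩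
  have hle : ∀ a, (∀ z : U, ∃ w : U, x • w = a • z) → a ∈ q := by
    intro a ha
    apply hq.1.2
    rw [Module.mem_annihilator]
    intro z
    obtain ⟨z, rfl⟩ := Submodule.mkQ_surjective _ z
    rw [← map_smul, Submodule.mkQ_apply, Submodule.Quotient.mk_eq_zero]
    obtain ⟨w, hw⟩ := ha z
    exact ⟨w, trivial, hw⟩
  refine lt_of_le_of_ne ?_ ?_
  · intro a ha
    exact hle a fun z => ⟨0, by rw [smul_zero]; exact Subtype.ext (z.2 a ha).symm⟩
  · rintro rfl
    exact hxp (hle x fun z => ⟨z, rfl⟩)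

lemma length_le_coheight {m : Ideal R} [m.IsPrime] (rs : List R) :
    ∀ {M : Type} [AddCommGroup M] [Module R M] [Module.Finite R M]
    (p : PrimeSpectrum R) (_ : p.asIdeal ∈ associatedPrimes R M) (_ : p.asIdeal ≤ m)
    (_ : ∀ r ∈ rs, r ∈ m) (_ : RingTheory.Sequence.IsWeaklyRegular M rs),
    (rs.length : ℕ∞) ≤ Order.coheight p := by
  induction rs with
  | nil => intros; simp
  | cons x rs ih =>
    intro M _ _ _ p hp hpm hrs hreg
    rw [RingTheory.Sequence.isWeaklyRegular_cons_iff] at hreg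
    obtain ⟨q, hq, hpq, hqm⟩ := exists_assPrime_quot hp hpm (hrs x (by simp)) hreg.1
    have := ih (M := QuotSMulTop x M) ⟨q, hq.1⟩ hq hqm (fun r hr => hrs r (by simp [hr])) hreg.2
    have h2 : Order.coheight (⟨q, hq.1⟩ : PrimeSpectrum R) + 1 ≤ Order.coheight p :=
      Order.coheight_add_one_le hpq
    refine le_trans ?_ h2
    simpa using this

end upper

section mon
variable {n : ℕ} {K : Type} [Field K]

/-- The prime ideal generated by the variables in `S`. -/
noncomputable def PS (K : Type) [Field K] {n : ℕ} (S : Finset (Fin n)) :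
    Ideal (MvPolynomial (Fin n) K) :=
  Ideal.span (X '' (S : Set (Fin n)))

lemma PS_prime (S : Finset (Fin n)) : (PS K S).IsPrime := by
  let φ : MvPolynomial (Fin n) K →ₐ[K] MvPolynomial (Fin n) K :=
    aeval (fun i => if i ∈ S then 0 else X i)
  have h : PS K S = RingHom.ker φ := by
    apply le_antisymm
    · refine Ideal.span_le.2 ?_
      rintro _ ⟨i, hi, rfl⟩
      have hi' : i ∈ S := hi
      simp [φ, RingHom.mem_ker, hi']
    · intro f hf
      have h2 : (Ideal.Quotient.mkₐ K (PS K S)).comp φ = Ideal.Quotient.mkₐ K (PS K S) := by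
        ext i
        by_cases hi : i ∈ S
        · have : (X i : MvPolynomial (Fin n) K) ∈ PS K S := Ideal.subset_span ⟨i, hi, rfl⟩
          simp [φ, hi, Ideal.Quotient.eq_zero_iff_mem.2 this]
        · simp [φ, hi]
      have h3 := DFunLike.congr_fun h2 f
      have hf' : φ f = 0 := hf
      simp only [AlgHom.comp_apply, hf', map_zero] at h3
      exact Ideal.Quotient.eq_zero_iff_mem.1 h3.symm
  rw [h]
  exact RingHom.ker_isPrime _

lemma X_mem_PS {S : Finset (Fin n)} {i : Fin n} :
    (X i : MvPolynomial (Fin n) K) ∈ PS K S ↔ i ∈ S := by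
  classical
  rw [PS, mem_ideal_span_X_image]
  simp [support_X, Finsupp.single_apply]

/-- `PS S` as a point of the spectrum. -/
noncomputable def PSpt (K : Type) [Field K] {n : ℕ} (S : Finset (Fin n)) :
    PrimeSpectrum (MvPolynomial (Fin n) K) := ⟨PS K S, PS_prime S⟩

lemma PSpt_lt {S : Finset (Fin n)} {i : Fin n} (hi : i ∉ S) :
    PSpt K S < PSpt K (insert i S) := by
  change PS K S < PS K (insert i S)
  refine lt_of_le_of_ne (Ideal.span_mono (Set.image_mono (by simp))) ?_
  intro h
  have h2 : (X i : MvPolynomial (Fin n) K) ∈ PS K (insert i S) := X_mem_PS.2 (by simp)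
  rw [← h, X_mem_PS] at h2
  exact hi h2

lemma card_le_height (S : Finset (Fin n)) : (S.card : ℕ∞) ≤ Order.height (PSpt K S) := by
  classical
  induction S using Finset.induction_on with
  | empty => simp
  | insert i S hi ih =>
    rw [Finset.card_insert_of_notMem hi]
    refine le_trans ?_ (Order.height_add_one_le (PSpt_lt hi))
    push_cast
    gcongr

lemma le_coheight (d : ℕ) : ∀ (S : Finset (Fin n)), n = S.card + d →
    (d : ℕ∞) ≤ Order.coheight (PSpt K S) := by
  classical
  induction d with
  | zero => intros; simp
  | succ d ih =>
    intro S hS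
    obtain ⟨i, hi⟩ : ∃ i, i ∉ S := by
      by_contra! h
      have : S = Finset.univ := by ext; simp [h]
      subst this
      simp at hS
    have := ih (insert i S) (by rw [Finset.card_insert_of_notMem hi]; omega)
    refine le_trans ?_ (Order.coheight_add_one_le (PSpt_lt hi))
    push_cast
    gcongr

lemma height_add_coheight_le (p : PrimeSpectrum (MvPolynomial (Fin n) K)) :
    Order.height p + Order.coheight p ≤ (n : ℕ∞) := by
  have h1 : ringKrullDim (MvPolynomial (Fin n) K) = n := by
    rw [MvPolynomial.ringKrullDim_of_isNoetherianRing]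
    simp
  rw [ringKrullDim, Order.krullDim_eq_iSup_height_add_coheight_of_nonempty] at h1
  have h2 : (⨆ a : PrimeSpectrum (MvPolynomial (Fin n) K), Order.height a + Order.coheight a)
    = (n : ℕ∞) := by exact_mod_cast h1
  rw [← h2]
  exact le_iSup (fun a : PrimeSpectrum (MvPolynomial (Fin n) K) =>
    Order.height a + Order.coheight a) p

lemma card_le_n (S : Finset (Fin n)) : S.card ≤ n := by
  simpa using S.card_le_univ

lemma height_coheight_PS (S : Finset (Fin n)) :
    Order.height (PSpt K S) = (S.card : ℕ∞) ∧
      Order.coheight (PSpt K S) = ((n - S.card : ℕ) : ℕ∞) := by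
  have h1 := card_le_height (K := K) S
  have hn := card_le_n S
  have h2 := le_coheight (K := K) (n - S.card) S (by omega)
  have h3 := height_add_coheight_le (PSpt K S)
  revert h1 h2 h3
  generalize Order.height (PSpt K S) = a
  generalize Order.coheight (PSpt K S) = b
  intro h1 h2 h3
  have ha : a ≠ ⊤ := by rintro rfl; simp at h3
  have hb : b ≠ ⊤ := by rintro rfl; simp at h3
  lift a to ℕ using ha
  lift b to ℕ using hb
  norm_cast at *
  omega

lemma htP_PS (S : Finset (Fin n)) : htP (PS K S) = (S.card : ℕ∞) := by
  rw [← (height_coheight_PS (K := K) S).1, htP]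
  exact iSup_pos (PS_prime S)

lemma dim_PS (S : Finset (Fin n)) :
    ringKrullDim (MvPolynomial (Fin n) K ⧸ PS K S) = (((n - S.card : ℕ) : ℕ∞) : WithBot ℕ∞) := by
  rw [← (height_coheight_PS (K := K) S).2, ringKrullDim_quotient, Order.coheight_eq_krullDim_Ici]
  rfl

lemma PS_le_m (S : Finset (Fin n)) : PS K S ≤ mIdeal n K :=
  Ideal.span_mono (Set.image_subset_range _ _)

lemma m_eq : mIdeal n K = PS K (Finset.univ : Finset (Fin n)) := by
  simp [mIdeal, PS]

/-- Ideal generated by monomials with exponents in `G`. -/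
noncomputable def mono (K : Type) [Field K] {n : ℕ} (G : Set (Fin n →₀ ℕ)) :
    Ideal (MvPolynomial (Fin n) K) :=
  Ideal.span ((fun a => monomial a (1 : K)) '' G)

lemma mem_mono {G : Set (Fin n →₀ ℕ)} {f : MvPolynomial (Fin n) K} :
    f ∈ mono K G ↔ ∀ a ∈ f.support, ∃ b ∈ G, b ≤ a := mem_ideal_span_monomial_image

lemma monomial_mem_mono {G : Set (Fin n →₀ ℕ)} {a : Fin n →₀ ℕ} :
    monomial a (1 : K) ∈ mono K G ↔ ∃ b ∈ G, b ≤ a := by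
  classical
  rw [mem_mono]
  simp [support_monomial]

lemma mono_add_pow (G : Set (Fin n →₀ ℕ)) (i : Fin n) (k : ℕ) :
    mono K G + Ideal.span {(X i : MvPolynomial (Fin n) K) ^ k} =
      mono K (insert (Finsupp.single i k) G) := by
  rw [mono, mono, Set.image_insert_eq, Ideal.span_insert, X_pow_eq_monomial, Submodule.add_eq_sup,
    sup_comm]

lemma mul_X_pow_mem (G : Set (Fin n →₀ ℕ)) (i : Fin n) (k : ℕ) (f : MvPolynomial (Fin n) K) :
    f * X i ^ k ∈ mono K G ↔ ∀ a ∈ f.support, ∃ b ∈ G, b ≤ a + Finsupp.single i k := by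
  classical
  rw [mem_mono, X_pow_eq_monomial]
  constructor
  · intro h a ha
    refine h _ ?_
    rw [mem_support_iff] at ha ⊢
    rwa [coeff_mul_monomial, mul_one]
  · intro h a ha
    rw [mem_support_iff, coeff_mul_monomial'] at ha
    split_ifs at ha with hs
    · rw [mul_one] at ha
      obtain ⟨b, hb, hba⟩ := h _ (mem_support_iff.2 ha)
      exact ⟨b, hb, by rwa [tsub_add_cancel_of_le hs] at hba⟩
    · exact absurd rfl ha

lemma mono_colon (G : Set (Fin n →₀ ℕ)) (i : Fin n) (k : ℕ) :
    (mono K G).colon (Ideal.span {(X i : MvPolynomial (Fin n) K) ^ k}) =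
      mono K {a | ∃ b ∈ G, b ≤ a + Finsupp.single i k} := by
  ext f
  rw [Ideal.submodule_span_eq.symm, Submodule.colon_span, Submodule.mem_colon_singleton, smul_eq_mul, mul_X_pow_mem,
    mem_mono]
  constructor
  · intro h a ha
    exact ⟨a, h a ha, le_rfl⟩
  · intro h a ha
    obtain ⟨c, ⟨b, hb, hbc⟩, hca⟩ := h a ha
    exact ⟨b, hb, hbc.trans (by gcongr)⟩


section exact
variable {R : Type} [CommRing R]

lemma exact_lsmul_factor (I : Ideal R) (r : R) {J : Ideal R} (hJ : I + Ideal.span {r} = J)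
    (hIJ : I ≤ J) :
    Function.Exact (LinearMap.lsmul R (R ⧸ I) r) (Submodule.factor hIJ) := by
  intro y
  obtain ⟨y, rfl⟩ := Submodule.mkQ_surjective _ y
  rw [Submodule.factor_mk, Submodule.mkQ_apply, Submodule.Quotient.mk_eq_zero, ← hJ,
    Submodule.add_eq_sup, Submodule.mem_sup]
  constructor
  · rintro ⟨a, ha, b, hb, rfl⟩
    obtain ⟨c, rfl⟩ := Ideal.mem_span_singleton.1 hb
    refine ⟨Submodule.Quotient.mk c, ?_⟩
    change Submodule.Quotient.mk (r • c) = _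
    rw [Submodule.mkQ_apply, Submodule.Quotient.eq]
    simpa using ha
  · rintro ⟨z, hz⟩
    obtain ⟨z, rfl⟩ := Submodule.mkQ_surjective _ z
    have hz' : (Submodule.Quotient.mk (r • z) : R ⧸ I) = Submodule.Quotient.mk y := hz
    rw [Submodule.Quotient.eq] at hz'
    refine ⟨y - r • z, by simpa using I.neg_mem hz', r * z,
      Ideal.mem_span_singleton.2 ⟨z, rfl⟩, by simp⟩

lemma mem_colon_span (I : Ideal R) (r f : R) :
    f ∈ I.colon (Ideal.span {r} : Ideal R) ↔ f * r ∈ I := by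
  rw [Ideal.submodule_span_eq.symm, Submodule.colon_span, Submodule.mem_colon_singleton,
    smul_eq_mul]

/-- Multiplication by `r` from `R/(I : r)` to `R/I`. -/
def colonMap (I : Ideal R) (r : R) :
    (R ⧸ I.colon (Ideal.span {r} : Ideal R)) →ₗ[R] (R ⧸ I) :=
  Submodule.mapQ _ I (LinearMap.lsmul R R r) (by
    intro f hf
    rw [mem_colon_span] at hf
    simpa [mul_comm] using hf)

lemma colonMap_injective (I : Ideal R) (r : R) : Function.Injective (colonMap I r) := by
  rw [injective_iff_map_eq_zero]
  intro z hz
  obtain ⟨z, rfl⟩ := Submodule.mkQ_surjective _ z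
  have hz' : (Submodule.Quotient.mk (r • z) : R ⧸ I) = 0 := hz
  rw [Submodule.Quotient.mk_eq_zero] at hz'
  rw [Submodule.mkQ_apply, Submodule.Quotient.mk_eq_zero, mem_colon_span]
  simpa [mul_comm] using hz'

lemma colonMap_exact (I : Ideal R) (r : R) {J : Ideal R} (hJ : I + Ideal.span {r} = J)
    (hIJ : I ≤ J) :
    Function.Exact (colonMap I r) (Submodule.factor hIJ) := by
  intro y
  rw [exact_lsmul_factor I r hJ hIJ y]
  constructor
  · rintro ⟨z, rfl⟩
    obtain ⟨z, rfl⟩ := Submodule.mkQ_surjective _ z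
    exact ⟨Submodule.Quotient.mk z, rfl⟩
  · rintro ⟨z, rfl⟩
    obtain ⟨z, rfl⟩ := Submodule.mkQ_surjective _ z
    exact ⟨Submodule.Quotient.mk z, rfl⟩

end exact

lemma extVan_cyl (d : ℕ) : ∀ (S : Finset (Fin n)) (G : Set (Fin n →₀ ℕ)),
    (∀ a ∈ G, ∀ i, i ∉ S → a i = 0) → n = S.card + d →
    ExtVan (R := MvPolynomial (Fin n) K) (MvPolynomial (Fin n) K ⧸ mIdeal n K)
      (MvPolynomial (Fin n) K ⧸ mono K G) d := by
  classical
  induction d with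
  | zero => intro S G _ _ i hi; omega
  | succ d ih =>
    intro S G hG hS
    obtain ⟨u, hu⟩ : ∃ i, i ∉ S := by
      by_contra! h
      have : S = Finset.univ := by ext; simp [h]
      subst this
      simp at hS
    have hJ := mono_add_pow (K := K) G u 1
    rw [pow_one] at hJ
    have h3 := ih (insert u S) (insert (Finsupp.single u 1) G) (by
      rintro a (rfl | ha) i hi
      · rw [Finset.mem_insert, not_or] at hi
        rw [Finsupp.single_apply, if_neg (Ne.symm hi.1)]
      · exact hG a ha i fun h => hi (Finset.mem_insert_of_mem h))
      (by rw [Finset.card_insert_of_notMem hu]; omega)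
    have hIJ : mono K G ≤ mono K (insert (Finsupp.single u 1) G) :=
      Ideal.span_mono (Set.image_mono (Set.subset_insert _ _))
    refine extVan_succ (X u) ?_ (Submodule.factor hIJ) ?_ (Submodule.factor_surjective hIJ)
      (exact_lsmul_factor _ _ hJ hIJ) h3
    · intro y
      obtain ⟨y, rfl⟩ := Submodule.mkQ_surjective _ y
      rw [← map_smul, Submodule.mkQ_apply, Submodule.Quotient.mk_eq_zero, smul_eq_mul]
      exact Ideal.mul_mem_right _ _ (Ideal.subset_span ⟨u, rfl⟩)
    · rw [isSMulRegular_iff_right_eq_zero_of_smul]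
      intro y hy
      obtain ⟨y, rfl⟩ := Submodule.mkQ_surjective _ y
      rw [← map_smul, Submodule.mkQ_apply, Submodule.Quotient.mk_eq_zero, smul_eq_mul] at hy
      rw [Submodule.mkQ_apply, Submodule.Quotient.mk_eq_zero]
      have hy' : y * X u ^ 1 ∈ mono K G := by rwa [pow_one, mul_comm]
      rw [mul_X_pow_mem] at hy'
      rw [mem_mono]
      intro a ha
      obtain ⟨b, hb, hba⟩ := hy' a ha
      refine ⟨b, hb, fun i => ?_⟩
      have := hba i
      by_cases hi : i = u
      · subst hi
        rw [hG b hb i hu]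
        exact Nat.zero_le _
      · rwa [Finsupp.add_apply, Finsupp.single_apply, if_neg (Ne.symm hi), add_zero] at this

lemma exists_var_mem {p : Ideal (MvPolynomial (Fin n) K)} (hp : p.IsPrime) {a : Fin n →₀ ℕ}
    (ha : monomial a (1 : K) ∈ p) : ∃ i, a i ≠ 0 ∧ (X i : MvPolynomial (Fin n) K) ∈ p := by
  have : monomial a (1 : K) = ∏ i ∈ a.support, (X i : MvPolynomial (Fin n) K) ^ a i := by
    rw [monomial_eq]
    simp [Finsupp.prod]
  rw [this] at ha
  obtain ⟨i, hi, h⟩ := (hp.prod_mem_iff).1 ha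
  exact ⟨i, Finsupp.mem_support_iff.1 hi, hp.mem_of_pow_mem _ h⟩

lemma primary_case (G : Set (Fin n →₀ ℕ)) (hI : (mono K G).IsPrimary) :
    ∃ S : Finset (Fin n), (mono K G).radical = PS K S ∧
      ∃ G' : Set (Fin n →₀ ℕ), (∀ a ∈ G', ∀ i, i ∉ S → a i = 0) ∧ mono K G = mono K G' := by
  classical
  have hr : (mono K G).radical.IsPrime := Ideal.isPrime_radical hI
  let S : Finset (Fin n) := Finset.univ.filter fun i => X i ∈ (mono K G).radical
  have hS : ∀ i, i ∈ S ↔ X i ∈ (mono K G).radical := by simp [S]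
  refine ⟨S, ?_, {a | monomial a (1 : K) ∈ mono K G ∧ ∀ i, i ∉ S → a i = 0},
    fun a ha => ha.2, ?_⟩
  · apply le_antisymm
    · rw [(PS_prime S).radical_le_iff]
      refine Ideal.span_le.2 ?_
      rintro _ ⟨a, ha, rfl⟩
      obtain ⟨i, hi, hm⟩ := exists_var_mem hr
        (Ideal.le_radical (Ideal.subset_span (Set.mem_image_of_mem _ ha)))
      have : monomial a (1 : K) = monomial (a - Finsupp.single i 1) 1 * X i := by
        rw [X, monomial_mul, mul_one, tsub_add_cancel_of_le]
        simpa [Nat.one_le_iff_ne_zero] using hi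
      simp only [SetLike.mem_coe]
      rw [this]
      exact Ideal.mul_mem_left _ _ (X_mem_PS.2 ((hS i).2 hm))
    · refine Ideal.span_le.2 ?_
      rintro _ ⟨i, hi, rfl⟩
      exact (hS i).1 hi
  · apply le_antisymm
    · refine Ideal.span_le.2 ?_
      rintro _ ⟨a, ha, rfl⟩
      have hmem : monomial a (1 : K) ∈ mono K G := Ideal.subset_span (Set.mem_image_of_mem _ ha)
      have hsplit : monomial a (1 : K) =
          monomial (a.filter (· ∈ S)) 1 * monomial (a.filter (fun i => ¬ i ∈ S)) 1 := by
        rw [monomial_mul, mul_one, Finsupp.filter_add_filter_not]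
      have h2 : monomial (a.filter (· ∈ S)) (1 : K) ∈ mono K G := by
        rw [hsplit, mul_comm] at hmem
        refine (hI.mem_or_mem hmem).resolve_right fun h => ?_
        rw [Submodule.colon_univ] at h
        obtain ⟨i, hi, hm⟩ := exists_var_mem hr h
        rw [← hS] at hm
        exact hi (Finsupp.filter_apply_neg _ _ (not_not.2 hm))
      simp only [SetLike.mem_coe]
      rw [hsplit]
      refine Ideal.mul_mem_right _ _ (Ideal.subset_span (Set.mem_image_of_mem _ ⟨h2, ?_⟩))
      intro i hi
      simp [Finsupp.filter_apply, hi]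
    · refine Ideal.span_le.2 ?_
      rintro _ ⟨a, ha, rfl⟩
      exact ha.1

lemma main_ind {I : Ideal (MvPolynomial (Fin n) K)} (hI : IsAssDecomposable I) :
    ∀ G : Set (Fin n →₀ ℕ), I = mono K G →
    (∀ p ∈ associatedPrimes (MvPolynomial (Fin n) K) (MvPolynomial (Fin n) K ⧸ I),
      ∃ S, p = PS K S) ∧
    ∀ d : ℕ, (∀ S, PS K S ∈ associatedPrimes (MvPolynomial (Fin n) K)
        (MvPolynomial (Fin n) K ⧸ I) → d ≤ n - S.card) →
      ExtVan (R := MvPolynomial (Fin n) K) (MvPolynomial (Fin n) K ⧸ mIdeal n K)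
        (MvPolynomial (Fin n) K ⧸ I) d := by
  induction hI with
  | primary h =>
    rintro G rfl
    obtain ⟨S, hS, G', hG', hGG⟩ := primary_case G h
    rw [associatedPrimes.eq_singleton_of_isPrimary h, hS]
    refine ⟨fun p hp => ⟨S, hp⟩, fun d hd i hi => ?_⟩
    have hd' := hd S rfl
    have hn := card_le_n S
    rw [hGG]
    exact extVan_cyl (n - S.card) S G' hG' (by omega) i (by omega)
  | @step I i k hk hx hass h1 h2 ih1 ih2 =>
    intro G hG
    have ih1' := ih1 _ (by rw [hG, mono_add_pow])
    have ih2' := ih2 _ (by rw [hG, mono_colon])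
    have hIJ : I ≤ I + Ideal.span {(X i : MvPolynomial (Fin n) K) ^ k} := le_sup_left
    have hinj := colonMap_injective I ((X i : MvPolynomial (Fin n) K) ^ k)
    have hex := colonMap_exact I ((X i : MvPolynomial (Fin n) K) ^ k) rfl hIJ
    constructor
    · intro p hp
      rcases associatedPrimes.subset_union_of_exact hinj hex hp with hp | hp
      · exact ih2'.1 p hp
      · exact ih1'.1 p hp
    · intro d hd
      refine extVan_of_exact _ _ hinj (Submodule.factor_surjective hIJ) hex
        (ih2'.2 d fun S hS => hd S (associatedPrimes.subset_of_injective hinj hS))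
        (ih1'.2 d fun S hS => hd S ?_)
      rw [hass] at hS
      exact hS.1

lemma ne_top_of_dec {I : Ideal (MvPolynomial (Fin n) K)} (hI : IsAssDecomposable I) : I ≠ ⊤ := by
  cases hI with
  | primary h => exact h.1
  | step i k hk hx hass h1 h2 =>
    rintro rfl
    exact hx (Ideal.le_radical trivial)

lemma smul_top_lt {I : Ideal (MvPolynomial (Fin n) K)} (hI : I ≤ mIdeal n K) :
    mIdeal n K • (⊤ : Submodule (MvPolynomial (Fin n) K) (MvPolynomial (Fin n) K ⧸ I)) < ⊤ := by
  refine lt_top_iff_ne_top.2 fun h => ?_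
  have hm : (mIdeal n K).IsPrime := by rw [m_eq]; exact PS_prime _
  have key : ∀ y ∈ mIdeal n K •
      (⊤ : Submodule (MvPolynomial (Fin n) K) (MvPolynomial (Fin n) K ⧸ I)),
      Submodule.factor hI y = 0 := by
    intro y hy
    refine Submodule.smul_induction_on hy ?_ ?_
    · intro r hr z _
      obtain ⟨z, rfl⟩ := Submodule.mkQ_surjective _ z
      rw [← map_smul, Submodule.factor_mk, Submodule.mkQ_apply, Submodule.Quotient.mk_eq_zero,
        smul_eq_mul]
      exact Ideal.mul_mem_right _ _ hr
    · intro a b ha hb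
      rw [map_add, ha, hb, add_zero]
  have h1 := key (Submodule.Quotient.mk 1) (by rw [h]; trivial)
  rw [← Submodule.mkQ_apply, Submodule.factor_mk, Submodule.mkQ_apply,
    Submodule.Quotient.mk_eq_zero] at h1
  exact hm.ne_top ((Ideal.eq_top_iff_one _).2 h1)

end mon

/-- If `I` is an ass-decomposable monomial ideal, then
`depth R/I = min {dim R/𝔭 : 𝔭 ∈ ass(I)} = n - bigh(I)`. -/
theorem statement_10 (n : ℕ) (K : Type) [Field K] (I : Ideal (MvPolynomial (Fin n) K))
    (hmon : IsMonomialIdeal I) (hdec : IsAssDecomposable I) :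
    (depth (mIdeal n K) (MvPolynomial (Fin n) K ⧸ I) : WithBot ℕ∞) =
        sInf {d : WithBot ℕ∞ | ∃ 𝔭 ∈ associatedPrimes (MvPolynomial (Fin n) K) (MvPolynomial (Fin n) K ⧸ I),
          d = ringKrullDim (MvPolynomial (Fin n) K ⧸ 𝔭)} ∧
    depth (mIdeal n K) (MvPolynomial (Fin n) K ⧸ I) = (n : ℕ∞) - bigh I := by
  obtain ⟨G, hG⟩ := hmon
  have hG' : I = mono K G := hG
  obtain ⟨hP, hE⟩ := main_ind hdec G hG'
  have hne := ne_top_of_dec hdec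
  have hm : (mIdeal n K).IsPrime := by rw [m_eq]; exact PS_prime _
  have : Nontrivial (MvPolynomial (Fin n) K ⧸ I) := Ideal.Quotient.nontrivial_iff.2 hne
  obtain ⟨p₀, hp₀⟩ := associatedPrimes.nonempty (MvPolynomial (Fin n) K)
    (MvPolynomial (Fin n) K ⧸ I)
  obtain ⟨S₀, rfl⟩ := hP p₀ hp₀
  have hIm : I ≤ mIdeal n K := by
    refine le_trans ?_ (PS_le_m S₀)
    have := IsAssociatedPrime.annihilator_le hp₀
    rwa [Submodule.annihilator_top, Ideal.annihilator_quotient] at this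
  obtain ⟨S, hS, hmax⟩ := Set.exists_max_image
    {S : Finset (Fin n) | PS K S ∈ associatedPrimes (MvPolynomial (Fin n) K)
      (MvPolynomial (Fin n) K ⧸ I)} Finset.card (Set.toFinite _) ⟨S₀, hp₀⟩
  have hdepth : depth (mIdeal n K) (MvPolynomial (Fin n) K ⧸ I) = ((n - S.card : ℕ) : ℕ∞) := by
    apply le_antisymm
    · refine sSup_le ?_
      rintro _ ⟨rs, rfl, hrs, hreg⟩
      have := length_le_coheight (m := mIdeal n K) rs (M := MvPolynomial (Fin n) K ⧸ I)
        (PSpt K S) hS (PS_le_m S) hrs hreg.1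
      rwa [(height_coheight_PS S).2] at this
    · refine le_sSup ?_
      obtain ⟨rs, hlen, hrs, hreg⟩ := ModuleCat.exists_isRegular_of_exists_subsingleton_ext
        (mIdeal n K) (n - S.card) (ModuleCat.of _ (MvPolynomial (Fin n) K ⧸ I))
        (smul_top_lt hIm) (ModuleCat.of _ (MvPolynomial (Fin n) K ⧸ mIdeal n K))
        (by rw [Module.support_eq_zeroLocus, Ideal.annihilator_quotient])
        (hE _ fun T hT => by have := hmax T hT; omega)
      exact ⟨rs, by rw [hlen], hrs, hreg⟩
  have hbigh : bigh I = (S.card : ℕ∞) := by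
    apply le_antisymm
    · refine iSup₂_le fun p hp => ?_
      obtain ⟨T, rfl⟩ := hP p hp
      rw [htP_PS]
      exact_mod_cast hmax T hp
    · rw [← htP_PS (K := K) S]
      exact le_iSup₂ (f := fun p (_ : p ∈ associatedPrimes (MvPolynomial (Fin n) K)
        (MvPolynomial (Fin n) K ⧸ I)) => htP p) (PS K S) hS
  refine ⟨?_, ?_⟩
  · rw [hdepth]
    apply le_antisymm
    · refine le_sInf ?_
      rintro _ ⟨p, hp, rfl⟩
      obtain ⟨T, rfl⟩ := hP p hp
      rw [dim_PS]
      have := hmax T hp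
      exact_mod_cast (by omega : n - S.card ≤ n - T.card)
    · exact sInf_le ⟨PS K S, hS, (dim_PS S).symm⟩
  · rw [hdepth, hbigh]
    push_cast
    rfl

end Paper
end

section
/- Let I be an unmixed ass-decomposable monomial ideal in R = K[x_1,…,x_n] that is not primary, and let x^k be a decomposing monomial of I. Then depth(R/I) = depth(R/(I : x^k)) = depth(R/(I + (x^k))). -/
open MvPolynomial

namespace Paper

/-! ### Regular sequences on cyclic modules, in terms of ideals -/

/-- `rs` is a weakly regular sequence on `A ⧸ I`, phrased elementwise. -/
def WReg {A : Type} [CommRing A] : Ideal A → List A → Prop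
  | _, [] => True
  | I, r :: rs => (∀ f, r * f ∈ I → f ∈ I) ∧ WReg (I ⊔ Ideal.span {r}) rs

theorem wreg_top {A : Type} [CommRing A] (rs : List A) : WReg (⊤ : Ideal A) rs := by
  induction rs with
  | nil => trivial
  | cons r rs ih => exact ⟨fun _ _ => trivial, by simpa using ih⟩

theorem mem_sup_span_iff {A : Type} [CommRing A] {I : Ideal A} {r f : A} :
    f ∈ I ⊔ Ideal.span {r} ↔ ∃ g, f - r * g ∈ I := by
  rw [Submodule.mem_sup]
  constructor
  · rintro ⟨a, ha, b, hb, rfl⟩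
    obtain ⟨c, rfl⟩ := Ideal.mem_span_singleton'.1 hb
    exact ⟨c, by simpa [mul_comm] using ha⟩
  · rintro ⟨g, hg⟩
    exact ⟨_, hg, r * g, Ideal.mem_span_singleton.2 ⟨g, rfl⟩, by ring⟩

/-- Extension lemma for the sequence `0 → A/(I:x) → A/I → A/(I+x) → 0`. -/
theorem wreg_ext {A : Type} [CommRing A] (x : A) (rs : List A) :
    ∀ I J : Ideal A, (∀ f, f ∈ J ↔ f * x ∈ I) → WReg J rs → WReg (I ⊔ Ideal.span {x}) rs →
      WReg I rs := by
  induction rs with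
  | nil => intros; trivial
  | cons r rs ih =>
    rintro I J hJ ⟨h1, h2⟩ ⟨h3, h4⟩
    have key : ∀ f, r * f ∈ I ⊔ Ideal.span {x} → f ∈ I ⊔ Ideal.span {x} := h3
    refine ⟨fun f hf => ?_, ih _ (J ⊔ Ideal.span {r}) ?_ h2 ?_⟩
    · obtain ⟨g, hg⟩ := mem_sup_span_iff.1 (h3 f (Ideal.mem_sup_left hf))
      have : r * g ∈ J := by
        rw [hJ]
        have := I.sub_mem hf (I.mul_mem_left r hg)
        ring_nf at this ⊢
        exact this
      have := I.add_mem hg ((hJ _).1 (h1 g this))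
      ring_nf at this
      exact this
    · intro f
      constructor
      · intro hf
        obtain ⟨g, hg⟩ := mem_sup_span_iff.1 hf
        refine mem_sup_span_iff.2 ⟨g * x, ?_⟩
        have := (hJ _).1 hg
        ring_nf at this ⊢
        exact this
      · intro hf
        obtain ⟨h, hh⟩ := mem_sup_span_iff.1 hf
        have h5 : r * h ∈ I ⊔ Ideal.span {x} := by
          refine mem_sup_span_iff.2 ⟨f, ?_⟩
          have := I.neg_mem hh
          ring_nf at this ⊢
          exact this
        obtain ⟨h', hh'⟩ := mem_sup_span_iff.1 (h3 h h5)
        refine mem_sup_span_iff.2 ⟨h', (hJ _).2 ?_⟩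
        have := I.add_mem hh (I.mul_mem_left r hh')
        ring_nf at this ⊢
        exact this
    · rwa [sup_right_comm]

theorem smulRegular_iff {A : Type} [CommRing A] (I : Ideal A) (r : A) :
    IsSMulRegular (A ⧸ I) r ↔ ∀ f, r * f ∈ I → f ∈ I := by
  rw [isSMulRegular_iff_right_eq_zero_of_smul]
  constructor
  · intro h f hf
    have := h (Ideal.Quotient.mk I f) (by
      rw [← Ideal.Quotient.mk_eq_mk, ← Submodule.Quotient.mk_smul, Submodule.Quotient.mk_eq_zero]
      exact hf)
    exact Ideal.Quotient.eq_zero_iff_mem.1 this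
  · intro h m hm
    obtain ⟨f, rfl⟩ := Ideal.Quotient.mk_surjective m
    rw [← Ideal.Quotient.mk_eq_mk, ← Submodule.Quotient.mk_smul,
      Submodule.Quotient.mk_eq_zero] at hm
    exact Ideal.Quotient.eq_zero_iff_mem.2 (h f hm)

noncomputable def quotEquiv {A : Type} [CommRing A] (I : Ideal A) (r : A) :
    QuotSMulTop r (A ⧸ I) ≃ₗ[A] A ⧸ (I ⊔ Ideal.span {r}) :=
  (Submodule.quotEquivOfEq _ _ (by
    ext m
    obtain ⟨f, rfl⟩ := Ideal.Quotient.mk_surjective m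
    rw [Submodule.mem_smul_pointwise_iff_exists, Submodule.mem_map]
    constructor
    · rintro ⟨b, -, hb⟩
      obtain ⟨g, rfl⟩ := Ideal.Quotient.mk_surjective b
      exact ⟨r * g, Ideal.mem_span_singleton.2 ⟨g, rfl⟩, hb⟩
    · rintro ⟨b, hb, h⟩
      obtain ⟨g, rfl⟩ := Ideal.mem_span_singleton.1 hb
      exact ⟨Ideal.Quotient.mk I g, trivial, h⟩)).trans
  (Submodule.quotientQuotientEquivQuotientSup I (Ideal.span {r}))

theorem wreg_iff {A : Type} [CommRing A] (rs : List A) : ∀ I : Ideal A,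
    RingTheory.Sequence.IsWeaklyRegular (A ⧸ I) rs ↔ WReg I rs := by
  induction rs with
  | nil => intro I; simp [WReg]
  | cons r rs ih =>
    intro I
    rw [RingTheory.Sequence.isWeaklyRegular_cons_iff, smulRegular_iff,
      (quotEquiv I r).isWeaklyRegular_congr, ih]
    rfl

theorem top_eq_smul_iff {A : Type} [CommRing A] (I L : Ideal A) :
    (⊤ : Submodule A (A ⧸ I)) = L • ⊤ ↔ I ⊔ L = ⊤ := by
  have h : (L • ⊤ : Submodule A (A ⧸ I)) = Submodule.map I.mkQ L := by
    have : (⊤ : Submodule A (A ⧸ I)) = Submodule.map I.mkQ ⊤ := by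
      rw [Submodule.map_top, Submodule.range_mkQ]
    rw [this, ← Submodule.map_smul'']
    simp
  rw [h, eq_comm, ← Submodule.map_mkQ_eq_top, ]

theorem wreg_length_le {A : Type} [CommRing A] (rs : List A) : ∀ I : Ideal A,
    WReg I rs → I ⊔ Ideal.ofList rs ≠ ⊤ → (rs.length : WithBot ℕ∞) ≤ ringKrullDim (A ⧸ I) := by
  induction rs with
  | nil =>
    intro I _ h
    have : Nontrivial (A ⧸ I) := Ideal.Quotient.nontrivial_iff.2 (by simpa using h)
    simpa using ringKrullDim_nonneg_of_nontrivial
  | cons r rs ih =>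
    rintro I ⟨h1, h2⟩ h
    have := ih _ h2 (by rwa [sup_assoc, ← Ideal.ofList_cons])
    have hnz : Ideal.Quotient.mk I r ∈ nonZeroDivisors (A ⧸ I) := by
      rw [mem_nonZeroDivisors_iff_right]
      intro m hm
      obtain ⟨f, rfl⟩ := Ideal.Quotient.mk_surjective m
      rw [← map_mul, Ideal.Quotient.eq_zero_iff_mem, mul_comm] at hm
      exact Ideal.Quotient.eq_zero_iff_mem.2 (h1 f hm)
    have h3 := ringKrullDim_quotient_succ_le_of_nonZeroDivisor hnz
    have e : ((A ⧸ I) ⧸ Ideal.span {Ideal.Quotient.mk I r}) ≃+* A ⧸ (I ⊔ Ideal.span {r}) := by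
      refine RingEquiv.trans (Ideal.quotEquivOfEq ?_)
        (DoubleQuot.quotQuotEquivQuotSup I (Ideal.span {r}))
      rw [Ideal.map_span, Set.image_singleton]
    rw [ringKrullDim_eq_of_ringEquiv e] at h3
    refine le_trans ?_ h3
    rw [List.length_cons, Nat.cast_add, Nat.cast_one]
    gcongr

theorem depth_eq {A : Type} [CommRing A] (J I : Ideal A) (d : ℕ) (rs : List A)
    (hl : rs.length = d) (hrs : ∀ r ∈ rs, r ∈ J) (hJ : J ≠ ⊤) (hIJ : I ≤ J) (hw : WReg I rs)
    (hd : ringKrullDim (A ⧸ I) ≤ d) : depth J (A ⧸ I) = d := by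
  apply le_antisymm
  · apply sSup_le
    rintro _ ⟨ss, rfl, -, h⟩
    have := wreg_length_le ss I ((wreg_iff _ _).1 h.1)
      (fun h' => h.2 ((top_eq_smul_iff _ _).2 h'))
    have := this.trans hd
    exact_mod_cast this
  · apply le_sSup
    refine ⟨rs, by rw [hl], hrs, (wreg_iff _ _).2 hw, fun h' => hJ ?_⟩
    rw [eq_top_iff, ← (top_eq_smul_iff _ _).1 h']
    exact sup_le hIJ (Ideal.span_le.2 hrs)

/-! ### The primes generated by variables -/

section Vars
variable {n : ℕ} {K : Type} [Field K]

/-- The ideal generated by the variables in `T`. -/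
noncomputable def pT (K : Type) [Field K] (T : Finset (Fin n)) : Ideal (MvPolynomial (Fin n) K) :=
  Ideal.span (X '' (T : Set (Fin n)))

noncomputable def phiT (K : Type) [Field K] (T : Finset (Fin n)) :
    MvPolynomial (Fin n) K →ₐ[K] MvPolynomial (Fin n) K :=
  aeval fun i => if i ∈ T then 0 else X i

theorem sub_phiT_mem (T : Finset (Fin n)) (f : MvPolynomial (Fin n) K) :
    f - phiT K T f ∈ pT K T := by
  rw [← Ideal.Quotient.mk_eq_mk_iff_sub_mem]
  change (Ideal.Quotient.mkₐ K (pT K T)) f = ((Ideal.Quotient.mkₐ K (pT K T)).comp (phiT K T)) f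
  congr 1
  apply MvPolynomial.algHom_ext
  intro i
  by_cases h : i ∈ T
  · simp only [phiT, AlgHom.comp_apply, aeval_X, h, if_true, map_zero]
    exact Ideal.Quotient.eq_zero_iff_mem.2 (Ideal.subset_span ⟨i, h, rfl⟩)
  · simp [phiT, h]

theorem pT_eq_ker (T : Finset (Fin n)) : pT K T = RingHom.ker (phiT K T) := by
  apply le_antisymm
  · refine Ideal.span_le.2 ?_
    rintro _ ⟨i, hi, rfl⟩
    have : i ∈ T := hi
    simp [phiT, RingHom.mem_ker, this]
  · intro f hf
    have := sub_phiT_mem T f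
    rwa [RingHom.mem_ker.1 hf, sub_zero] at this

theorem pT_prime (T : Finset (Fin n)) : (pT K T).IsPrime := by
  rw [pT_eq_ker]
  exact RingHom.ker_isPrime _

theorem X_mem_pT (T : Finset (Fin n)) (i : Fin n) :
    (X i : MvPolynomial (Fin n) K) ∈ pT K T ↔ i ∈ T := by
  rw [pT_eq_ker, RingHom.mem_ker]
  by_cases h : i ∈ T <;> simp [phiT, h]

theorem pT_insert (T : Finset (Fin n)) (s : Fin n) :
    pT K (insert s T) = pT K T ⊔ Ideal.span {X s} := by
  rw [pT, pT, Finset.coe_insert, Set.image_insert_eq, Ideal.span_insert, sup_comm]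

theorem mIdeal_eq : mIdeal n K = pT K Finset.univ := by
  simp [mIdeal, pT]

/-- The elementary symmetric polynomials `e_d, …, e_1`. -/
noncomputable def esList (n : ℕ) (K : Type) [Field K] : ℕ → List (MvPolynomial (Fin n) K)
  | 0 => []
  | d + 1 => esymm (Fin n) K (d + 1) :: esList n K d

theorem esList_length (d : ℕ) : (esList n K d).length = d := by
  induction d with
  | zero => rfl
  | succ d ih => simp [esList, ih]

theorem esList_mem (d : ℕ) : ∀ r ∈ esList n K d, r ∈ mIdeal n K := by
  induction d with
  | zero => simp [esList]
  | succ d ih =>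
    intro r hr
    rcases List.mem_cons.1 hr with rfl | hr
    · refine Ideal.sum_mem _ fun t ht => ?_
      obtain ⟨i, hi⟩ : t.Nonempty := by
        rw [← Finset.card_pos, (Finset.mem_powersetCard.1 ht).2]; omega
      exact Ideal.mem_of_dvd _ (Finset.dvd_prod_of_mem _ hi) (Ideal.subset_span ⟨i, rfl⟩)
    · exact ih r hr

theorem esymm_sub_mem (T : Finset (Fin n)) :
    esymm (Fin n) K (Tᶜ.card) - ∏ s ∈ Tᶜ, X s ∈ pT K T := by
  rw [esymm, ← Finset.add_sum_erase _ _
    (show Tᶜ ∈ Finset.powersetCard (Tᶜ.card) Finset.univ by simp), add_sub_cancel_left]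
  refine Ideal.sum_mem _ fun t ht => ?_
  obtain ⟨h1, h2⟩ := Finset.mem_erase.1 ht
  have h3 := (Finset.mem_powersetCard.1 h2).2
  have : ¬ t ⊆ Tᶜ := fun h => h1 (Finset.eq_of_subset_of_card_le h h3.ge)
  obtain ⟨i, hi, hi'⟩ := Finset.not_subset.1 this
  exact Ideal.mem_of_dvd _ (Finset.dvd_prod_of_mem _ hi)
    ((X_mem_pT _ _).2 (by simpa using hi'))

theorem sup_span_congr {A : Type} [CommRing A] {I : Ideal A} {r s : A} (h : r - s ∈ I) :
    I ⊔ Ideal.span {r} = I ⊔ Ideal.span {s} := by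
  apply le_antisymm
  · refine sup_le le_sup_left ?_
    rw [Ideal.span_singleton_le_iff_mem]
    exact mem_sup_span_iff.2 ⟨1, by simpa using h⟩
  · refine sup_le le_sup_left ?_
    rw [Ideal.span_singleton_le_iff_mem]
    exact mem_sup_span_iff.2 ⟨1, by simpa using I.neg_mem h⟩

theorem wreg_prod (T : Finset (Fin n)) (rs : List (MvPolynomial (Fin n) K))
    (h : ∀ s ∉ T, WReg (pT K (insert s T)) rs) (S : Finset (Fin n)) (hS : Disjoint S T) :
    WReg (pT K T ⊔ Ideal.span {∏ s ∈ S, X s}) rs := by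
  induction S using Finset.induction_on with
  | empty =>
    convert wreg_top rs
    simp
  | insert a S ha ih =>
    rw [Finset.disjoint_insert_left] at hS
    refine wreg_ext (X a) rs _ _ ?_ (ih hS.2) ?_
    · intro f
      rw [mem_sup_span_iff, mem_sup_span_iff, Finset.prod_insert ha]
      refine exists_congr fun g => ?_
      have : f * X a - X a * (∏ s ∈ S, X s) * g = X a * (f - (∏ s ∈ S, X s) * g) := by ring
      rw [this]
      refine ⟨fun h => Ideal.mul_mem_left _ _ h, fun h => ?_⟩
      exact ((pT_prime T).mem_or_mem h).resolve_left (by rw [X_mem_pT]; exact hS.1)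
    · convert h a hS.1 using 1
      rw [pT_insert, sup_assoc]
      congr 1
      rw [sup_eq_right, Ideal.span_singleton_le_span_singleton]
      exact Finset.dvd_prod_of_mem _ (Finset.mem_insert_self _ _)

theorem wreg_pT (d : ℕ) : ∀ T : Finset (Fin n), Tᶜ.card = d → WReg (pT K T) (esList n K d) := by
  induction d with
  | zero => intros; trivial
  | succ d ih =>
    intro T hT
    have h1 := esymm_sub_mem (K := K) T
    rw [hT] at h1
    refine ⟨fun f hf => ?_, ?_⟩
    · refine ((pT_prime T).mem_or_mem hf).resolve_left fun h => ?_
      have h2 : ∏ s ∈ Tᶜ, (X s : MvPolynomial (Fin n) K) ∈ pT K T := by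
        have := Ideal.sub_mem _ h h1
        rwa [sub_sub_cancel] at this
      have := pT_prime (K := K) T
      obtain ⟨s, hs, hs'⟩ := (Ideal.IsPrime.prod_mem_iff).1 h2
      rw [X_mem_pT] at hs'
      simp at hs
      exact hs hs'
    · rw [sup_span_congr h1]
      refine wreg_prod T _ (fun s hs => ih _ ?_) _ disjoint_compl_left
      rw [Finset.compl_insert, Finset.card_erase_of_mem (by simpa using hs), hT]
      rfl

theorem dim_pT (T : Finset (Fin n)) :
    ringKrullDim (MvPolynomial (Fin n) K ⧸ pT K T) = (Tᶜ.card : ℕ) := by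
  apply le_antisymm
  · let g : MvPolynomial {x // x ∈ Tᶜ} K →ₐ[K] MvPolynomial (Fin n) K ⧸ pT K T :=
      aeval fun i => Ideal.Quotient.mk _ (X i.1)
    have hg : Function.Surjective g := by
      rw [← AlgHom.range_eq_top, eq_top_iff]
      rintro m -
      obtain ⟨f, rfl⟩ := Ideal.Quotient.mk_surjective m
      induction f using MvPolynomial.induction_on with
      | C a => exact ⟨C a, by simp [g]; rfl⟩
      | add p q hp hq => rw [map_add]; exact add_mem hp hq
      | mul_X p i hp =>
        rw [map_mul]
        refine mul_mem hp ?_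
        by_cases h : i ∈ T
        · rw [Ideal.Quotient.eq_zero_iff_mem.2 ((X_mem_pT T i).2 h)]
          exact zero_mem _
        · exact ⟨X ⟨i, by simpa using h⟩, by simp [g]⟩
    refine (ringKrullDim_le_of_surjective g.toRingHom hg).trans ?_
    rw [MvPolynomial.ringKrullDim_of_isNoetherianRing, ringKrullDim_eq_zero_of_field]
    simp
  · have := wreg_length_le _ _ (wreg_pT (K := K) _ T rfl) (by
      intro h
      have h2 : mIdeal n K ≠ ⊤ := by rw [mIdeal_eq]; exact (pT_prime _).ne_top
      apply h2
      rw [eq_top_iff, ← h]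
      refine sup_le ?_ (Ideal.span_le.2 (esList_mem _))
      exact Ideal.span_mono (Set.image_subset_range _ _))
    rwa [esList_length] at this

/-! ### Monomial ideals -/

/-- Elementwise version of being a monomial ideal. -/
def Mono (I : Ideal (MvPolynomial (Fin n) K)) : Prop :=
  ∀ f ∈ I, ∀ m ∈ f.support, monomial m (1 : K) ∈ I

theorem mem_of_monomials {I : Ideal (MvPolynomial (Fin n) K)} {f : MvPolynomial (Fin n) K}
    (h : ∀ m ∈ f.support, monomial m (1 : K) ∈ I) : f ∈ I := by
  rw [f.as_sum]
  refine Ideal.sum_mem _ fun m hm => ?_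
  have : monomial m (coeff m f) = C (coeff m f) * monomial m (1 : K) := by
    rw [C_mul_monomial, mul_one]
  rw [this]
  exact Ideal.mul_mem_left _ _ (h m hm)

theorem mono_of_isMonomialIdeal {I : Ideal (MvPolynomial (Fin n) K)} (h : IsMonomialIdeal I) :
    Mono I := by
  obtain ⟨S, rfl⟩ := h
  intro f hf m hm
  rw [mem_ideal_span_monomial_image] at hf ⊢
  intro m' hm'
  rw [Finset.mem_singleton.1 (support_monomial_subset hm')]
  exact hf m hm

theorem support_mul_X_pow_shift {f : MvPolynomial (Fin n) K} {i : Fin n} {k : ℕ} {m : Fin n →₀ ℕ}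
    (hm : m ∈ f.support) : m + Finsupp.single i k ∈ (f * X i ^ k).support := by
  rw [mem_support_iff, X_pow_eq_monomial, coeff_mul_monomial, mul_one]
  exact mem_support_iff.1 hm

theorem monomial_shift (m : Fin n →₀ ℕ) (i : Fin n) (k : ℕ) :
    monomial (m + Finsupp.single i k) (1 : K) = monomial m 1 * X i ^ k := by
  rw [X_pow_eq_monomial, monomial_mul, mul_one]

theorem Mono.colon {I J : Ideal (MvPolynomial (Fin n) K)} (hI : Mono I) {i : Fin n} {k : ℕ}
    (hJ : ∀ f, f ∈ J ↔ f * X i ^ k ∈ I) : Mono J := by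
  intro f hf m hm
  rw [hJ, ← monomial_shift]
  exact hI _ ((hJ _).1 hf) _ (support_mul_X_pow_shift hm)

/-- Supports of elements of `I + (x_i^k)`. -/
theorem Mono.mem_sup {I : Ideal (MvPolynomial (Fin n) K)} (hI : Mono I) {i : Fin n} {k : ℕ}
    {f : MvPolynomial (Fin n) K} (hf : f ∈ I ⊔ Ideal.span {X i ^ k}) {m : Fin n →₀ ℕ}
    (hm : m ∈ f.support) : monomial m (1 : K) ∈ I ∨ k ≤ m i := by
  obtain ⟨g, hg⟩ := mem_sup_span_iff.1 hf
  by_contra hcon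
  push Not at hcon
  obtain ⟨h1, h2⟩ := hcon
  have h3 : coeff m (f - X i ^ k * g) = 0 := by
    by_contra h
    exact h1 (hI _ hg m (mem_support_iff.2 h))
  rw [coeff_sub, X_pow_eq_monomial, coeff_monomial_mul', if_neg, sub_zero] at h3
  · exact mem_support_iff.1 hm h3
  · intro h
    have := h i
    simp at this
    omega

theorem monomial_mem_of_le {I : Ideal (MvPolynomial (Fin n) K)} {i : Fin n} {k : ℕ}
    {m : Fin n →₀ ℕ} (h : k ≤ m i) (hX : X i ^ k ∈ I) : monomial m (1 : K) ∈ I := by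
  refine Ideal.mem_of_dvd _ ?_ hX
  rw [X_pow_eq_monomial, monomial_dvd_monomial]
  exact ⟨Or.inr (by simpa using h), dvd_rfl⟩

theorem Mono.sup {I : Ideal (MvPolynomial (Fin n) K)} (hI : Mono I) (i : Fin n) (k : ℕ) :
    Mono (I ⊔ Ideal.span {X i ^ k}) := by
  intro f hf m hm
  rcases hI.mem_sup hf hm with h | h
  · exact Ideal.mem_sup_left h
  · exact monomial_mem_of_le h (Ideal.mem_sup_right (Ideal.mem_span_singleton_self _))

/-- If the variables outside `T` are non zero divisors modulo the proper ideal `q`,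
then monomials in `q` involve variables of `T`. -/
theorem le_pT {q : Ideal (MvPolynomial (Fin n) K)} {T : Finset (Fin n)} (hq : Mono q)
    (hne : q ≠ ⊤) (h : ∀ t ∉ T, ∀ f, X t * f ∈ q → f ∈ q) : q ≤ pT K T := by
  intro f hf
  rw [pT, mem_ideal_span_X_image]
  intro m hm
  by_contra hcon
  push Not at hcon
  have hmq := hq f hf m hm
  have hpow : ∀ t ∉ T, ∀ (k : ℕ) f, X t ^ k * f ∈ q → f ∈ q := by
    intro t ht k
    induction k with
    | zero => intro f hf; simpa using hf
    | succ k ih =>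
      intro f hf
      rw [pow_succ, mul_assoc] at hf
      exact h t ht _ (ih _ hf)
  have hprod : ∀ (S : Finset (Fin n)) , (∏ s ∈ S, (X s : MvPolynomial (Fin n) K) ^ m s) ∈ q →
      False := by
    intro S
    induction S using Finset.induction_on with
    | empty => intro h; exact hne ((Ideal.eq_top_iff_one _).2 (by simpa using h))
    | insert a S ha ih =>
      intro h
      rw [Finset.prod_insert ha] at h
      by_cases haT : a ∈ T
      · rw [hcon a haT, pow_zero, one_mul] at h
        exact ih h
      · exact ih (hpow a haT _ _ h)
  apply hprod m.support
  rw [monomial_eq] at hmq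
  simpa [Finsupp.prod] using hmq

theorem wreg_primary (T : Finset (Fin n)) (rs : List (MvPolynomial (Fin n) K))
    (hT : WReg (pT K T) rs) (q : Ideal (MvPolynomial (Fin n) K)) : Mono q → q ≠ ⊤ →
    (∀ t ∈ T, X t ∈ q.radical) → (∀ t ∉ T, ∀ f, X t * f ∈ q → f ∈ q) → WReg q rs := by
  induction q using WellFoundedGT.induction with
  | ind q ih =>
  intro hq hne h1 h2
  by_cases hall : ∀ t ∈ T, (X t : MvPolynomial (Fin n) K) ∈ q
  · have : q = pT K T := by
      apply le_antisymm (le_pT hq hne h2)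
      refine Ideal.span_le.2 ?_
      rintro _ ⟨t, ht, rfl⟩
      exact hall t ht
    rwa [this]
  · push Not at hall
    obtain ⟨j, hj, hjq⟩ := hall
    have hcol : ∀ f, f ∈ Submodule.colon q (Ideal.span {(X j : MvPolynomial (Fin n) K)}) ↔
        f * X j ∈ q := fun f => Ideal.mem_colon_span_singleton
    set J := Submodule.colon q (Ideal.span {(X j : MvPolynomial (Fin n) K)} :
      Set (MvPolynomial (Fin n) K)) with hJdef
    have hqJ : q ≤ J := fun f hf => (hcol f).2 (Ideal.mul_mem_right _ _ hf)
    have hJne : J ≠ ⊤ := by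
      rw [Ne, Ideal.eq_top_iff_one, hcol, one_mul]
      exact hjq
    have hltJ : q < J := by
      refine lt_of_le_of_ne hqJ ?_
      intro heq
      obtain ⟨k, hk⟩ := h1 j hj
      have : ∀ k : ℕ, (X j : MvPolynomial (Fin n) K) ^ k ∈ q → False := by
        intro k
        induction k with
        | zero => intro h; exact hne ((Ideal.eq_top_iff_one _).2 (by simpa using h))
        | succ k ih' =>
          intro h
          rw [pow_succ, ← hcol, ← heq] at h
          exact ih' h
      exact this k hk
    refine wreg_ext (X j) rs q J hcol (ih J hltJ ?_ hJne ?_ ?_) (ih _ ?_ ?_ ?_ ?_ ?_)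
    · exact hq.colon (i := j) (k := 1) (by simpa using hcol)
    · exact fun t ht => Ideal.radical_mono hqJ (h1 t ht)
    · intro t ht f hf
      rw [hcol] at hf ⊢
      exact h2 t ht _ (by rwa [← mul_assoc])
    · exact lt_of_le_of_ne le_sup_left fun h => hjq (by
        rw [h]; exact Ideal.mem_sup_right (Ideal.mem_span_singleton_self _))
    · simpa using hq.sup j 1
    · have : q ⊔ Ideal.span {X j} ≤ pT K T := by
        refine sup_le (le_pT hq hne h2) ?_
        rw [Ideal.span_singleton_le_iff_mem, X_mem_pT]
        exact hj
      exact fun h => (pT_prime T).ne_top (top_le_iff.1 (h ▸ this))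
    · exact fun t ht => Ideal.radical_mono le_sup_left (h1 t ht)
    · intro t ht f hf
      refine mem_of_monomials fun m hm => ?_
      have hm' := support_mul_X_pow_shift (i := t) (k := 1) hm
      rw [pow_one, mul_comm] at hm'
      have hf' : X t * f ∈ q ⊔ Ideal.span {X j ^ 1} := by rwa [pow_one]
      rcases hq.mem_sup hf' hm' with h | h
      · rw [monomial_shift, pow_one, mul_comm] at h
        exact Ideal.mem_sup_left (h2 t ht _ h)
      · have htj : t ≠ j := fun h => ht (h ▸ hj)
        refine monomial_mem_of_le (i := j) (k := 1) ?_ ?_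
        · simpa [Finsupp.single_apply, htj] using h
        · rw [pow_one]
          exact Ideal.mem_sup_right (Ideal.mem_span_singleton_self _)

theorem ass_colon {A : Type} [CommRing A] (I : Ideal A) (x : A) :
    associatedPrimes A (A ⧸ I.colon (Ideal.span {x})) ⊆ associatedPrimes A (A ⧸ I) := by
  let g : A →ₗ[A] A ⧸ I := I.mkQ.comp (LinearMap.mulRight A x)
  have hg : I.colon (Ideal.span {x}) = LinearMap.ker g := by
    ext f
    rw [Ideal.mem_colon_span_singleton, LinearMap.mem_ker]
    simp only [g, LinearMap.comp_apply, LinearMap.mulRight_apply, Submodule.mkQ_apply,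
      Submodule.Quotient.mk_eq_zero]
  refine associatedPrimes.subset_of_injective
    (f := Submodule.liftQ (I.colon (Ideal.span {x})) g hg.le) ?_
  rw [← LinearMap.ker_eq_bot, Submodule.ker_liftQ_eq_bot]
  exact hg.ge

theorem wreg_decomposable (d : ℕ) (I : Ideal (MvPolynomial (Fin n) K))
    (h : IsAssDecomposable I) : Mono I →
    (∀ p ∈ associatedPrimes (MvPolynomial (Fin n) K) (MvPolynomial (Fin n) K ⧸ I),
      ringKrullDim (MvPolynomial (Fin n) K ⧸ p) = d) → WReg I (esList n K d) := by
  induction h with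
  | @primary q hq =>
    intro hmono hass
    classical
    let T : Finset (Fin n) := Finset.univ.filter fun t => X t ∈ q.radical
    have hq' := Ideal.isPrimary_iff.1 hq
    have h1 : ∀ t ∈ T, X t ∈ q.radical := fun t ht => (Finset.mem_filter.1 ht).2
    have h2 : ∀ t ∉ T, ∀ f, X t * f ∈ q → f ∈ q := by
      intro t ht f hf
      rw [mul_comm] at hf
      refine (hq'.2 hf).resolve_right fun h => ht (Finset.mem_filter.2 ⟨Finset.mem_univ _, h⟩)
    have hrad : q.radical = pT K T := by
      apply le_antisymm
      · exact (pT_prime T).radical_le_iff.2 (le_pT hmono hq'.1 h2)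
      · refine Ideal.span_le.2 ?_
        rintro _ ⟨t, ht, rfl⟩
        exact h1 t ht
    have hd := hass q.radical (by rw [associatedPrimes.eq_singleton_of_isPrimary hq]; rfl)
    rw [hrad, dim_pT] at hd
    exact wreg_primary T _ (wreg_pT d T (by exact_mod_cast hd)) q hmono hq'.1 h1 h2
  | @step I i k hk hx hass _ _ ih1 ih2 =>
    intro hmono hI
    have hcol : ∀ f, f ∈ I.colon (Ideal.span {(X i : MvPolynomial (Fin n) K) ^ k}) ↔
        f * X i ^ k ∈ I := fun f => Ideal.mem_colon_span_singleton
    refine wreg_ext (X i ^ k) _ I _ hcol (ih2 (hmono.colon hcol) ?_) (ih1 (hmono.sup i k) ?_)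
    · exact fun p hp => hI p (ass_colon _ _ hp)
    · intro p hp
      rw [hass] at hp
      exact hI p hp.1

theorem Mono.le_mIdeal {I : Ideal (MvPolynomial (Fin n) K)} (hI : Mono I) (hne : I ≠ ⊤) :
    I ≤ mIdeal n K := by
  rw [mIdeal_eq]
  exact le_pT hI hne (fun t ht => absurd (Finset.mem_univ t) ht)

theorem depth_eq_of_mono {I : Ideal (MvPolynomial (Fin n) K)} (hI : Mono I) (hne : I ≠ ⊤)
    (d : ℕ) (hw : WReg I (esList n K d))
    (hd : ringKrullDim (MvPolynomial (Fin n) K ⧸ I) ≤ d) :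
    depth (mIdeal n K) (MvPolynomial (Fin n) K ⧸ I) = d :=
  depth_eq _ _ d _ (esList_length d) (esList_mem d)
    (by rw [mIdeal_eq]; exact (pT_prime _).ne_top) (hI.le_mIdeal hne) hw hd

end Vars

/-- If `I` is an unmixed ass-decomposable monomial ideal which is not primary and
`x^k` is a decomposing monomial of `I`, then
`depth R/I = depth R/(I : x^k) = depth R/(I, x^k)`. -/
theorem statement_11 (n : ℕ) (K : Type) [Field K] (I : Ideal (MvPolynomial (Fin n) K))
    (hmon : IsMonomialIdeal I) (hunm : IsUnmixed I) (hnp : ¬ I.IsPrimary)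
    (i : Fin n) (k : ℕ) (hk : 1 ≤ k) (hx : (X i : MvPolynomial (Fin n) K) ∉ I.radical)
    (hass : associatedPrimes (MvPolynomial (Fin n) K)
        (MvPolynomial (Fin n) K ⧸ (I + Ideal.span {(X i : MvPolynomial (Fin n) K) ^ k})) =
      {𝔭 ∈ associatedPrimes (MvPolynomial (Fin n) K) (MvPolynomial (Fin n) K ⧸ I) |
        (X i : MvPolynomial (Fin n) K) ∈ 𝔭})
    (h1 : IsAssDecomposable (I + Ideal.span {(X i : MvPolynomial (Fin n) K) ^ k}))
    (h2 : IsAssDecomposable (I.colon (Ideal.span {(X i : MvPolynomial (Fin n) K) ^ k}))) :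
    depth (mIdeal n K) (MvPolynomial (Fin n) K ⧸ I) =
        depth (mIdeal n K) (MvPolynomial (Fin n) K ⧸ I.colon (Ideal.span {(X i : MvPolynomial (Fin n) K) ^ k})) ∧
    depth (mIdeal n K) (MvPolynomial (Fin n) K ⧸ I) =
        depth (mIdeal n K) (MvPolynomial (Fin n) K ⧸ (I + Ideal.span {(X i : MvPolynomial (Fin n) K) ^ k})) := by
  have hmono := mono_of_isMonomialIdeal hmon
  have hne : I ≠ ⊤ := by rintro rfl; apply hx; rw [Ideal.radical_top]; trivial
  obtain ⟨d, hd⟩ : ∃ d : ℕ, ringKrullDim (MvPolynomial (Fin n) K ⧸ I) = d := by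
    have : Nontrivial (MvPolynomial (Fin n) K ⧸ I) := Ideal.Quotient.nontrivial_iff.2 hne
    have h1 : ringKrullDim (MvPolynomial (Fin n) K ⧸ I) ≤ (n : ℕ) := by
      refine (ringKrullDim_quotient_le I).trans ?_
      rw [MvPolynomial.ringKrullDim_of_isNoetherianRing, ringKrullDim_eq_zero_of_field]
      simp
    have h0 : 0 ≤ ringKrullDim (MvPolynomial (Fin n) K ⧸ I) :=
      ringKrullDim_nonneg_of_nontrivial
    revert h0 h1
    generalize ringKrullDim (MvPolynomial (Fin n) K ⧸ I) = a
    intro h1 h0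
    induction a with
    | bot => simp at h0
    | coe a =>
      induction a with
      | top => exact absurd h1 (by rw [not_le]; exact_mod_cast ENat.natCast_lt_top n)
      | coe a => exact ⟨a, rfl⟩
  have hassd : ∀ p ∈ associatedPrimes (MvPolynomial (Fin n) K) (MvPolynomial (Fin n) K ⧸ I),
      ringKrullDim (MvPolynomial (Fin n) K ⧸ p) = d := fun p hp => by rw [← hunm p hp, hd]
  have hcol : ∀ f, f ∈ I.colon (Ideal.span {(X i : MvPolynomial (Fin n) K) ^ k}) ↔
      f * X i ^ k ∈ I := fun f => Ideal.mem_colon_span_singleton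
  have hIc : I ≤ I.colon (Ideal.span {(X i : MvPolynomial (Fin n) K) ^ k}) :=
    fun f hf => (hcol f).2 (Ideal.mul_mem_right _ _ hf)
  have hIs : I ≤ I + Ideal.span {(X i : MvPolynomial (Fin n) K) ^ k} := le_sup_left
  have e1 := depth_eq_of_mono hmono hne d
    (wreg_decomposable d I (.step i k hk hx hass h1 h2) hmono hassd) hd.le
  have e2 := depth_eq_of_mono (hmono.colon hcol)
    (by
      rw [Ne, Ideal.eq_top_iff_one, hcol, one_mul]
      exact fun h => hx (Ideal.mem_radical_iff.2 ⟨k, h⟩)) d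
    (wreg_decomposable d _ h2 (hmono.colon hcol) fun p hp => hassd p (ass_colon _ _ hp))
    ((ringKrullDim_le_of_surjective _ (Ideal.Quotient.factor_surjective hIc)).trans hd.le)
  have e3 := depth_eq_of_mono (I := I + Ideal.span {(X i : MvPolynomial (Fin n) K) ^ k})
    (hmono.sup i k)
    (by
      have h : I + Ideal.span {(X i : MvPolynomial (Fin n) K) ^ k} ≤ mIdeal n K := by
        refine sup_le (hmono.le_mIdeal hne) ?_
        rw [Ideal.span_singleton_le_iff_mem]
        have hXi : (X i : MvPolynomial (Fin n) K) ∈ mIdeal n K := Ideal.subset_span ⟨i, rfl⟩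
        exact Ideal.pow_mem_of_mem _ hXi k (by omega)
      intro h'
      rw [h', mIdeal_eq] at h
      exact (pT_prime _).ne_top (top_le_iff.1 h)) d
    (wreg_decomposable d _ h1 (hmono.sup i k) fun p hp => by
      rw [hass] at hp
      exact hassd p hp.1)
    ((ringKrullDim_le_of_surjective _ (Ideal.Quotient.factor_surjective hIs)).trans hd.le)
  exact ⟨e1.trans e2.symm, e1.trans e3.symm⟩

end Paper
end

section
/- Let G be a forest (a finite simple graph with no cycles) with at least one edge, let v be a pendant vertex of G, and let w be the neighbor of v. Then w is a shedding vertex of the independence complex Δ_G, one has link_{Δ_G}(w) = Δ_{G∖N_G[w]} and del_{Δ_G}(w) = Δ_{G∖w}, and consequently Δ_G is vertex decomposable. -/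
open MvPolynomial

namespace Paper

/-- An (abstract) simplicial complex: a nonempty, downward closed collection of
finite subsets of the vertex set. -/
def IsComplex {n : ℕ} (Δ : Set (Finset (Fin n))) : Prop :=
  Δ.Nonempty ∧ ∀ F ∈ Δ, ∀ G, G ⊆ F → G ∈ Δ

/-- The deletion `del_Δ(v)`. -/
def delC {n : ℕ} (Δ : Set (Finset (Fin n))) (v : Fin n) : Set (Finset (Fin n)) :=
  {G ∈ Δ | v ∉ G}

/-- The link `link_Δ(v)`. -/
def linkC {n : ℕ} (Δ : Set (Finset (Fin n))) (v : Fin n) : Set (Finset (Fin n)) :=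
  {G | G ∈ Δ ∧ v ∉ G ∧ insert v G ∈ Δ}

/-- A facet is a maximal face. -/
def IsFacet {n : ℕ} (Δ : Set (Finset (Fin n))) (F : Finset (Fin n)) : Prop :=
  F ∈ Δ ∧ ∀ G ∈ Δ, F ⊆ G → G = F

/-- A vertex `v` of `Δ` is a shedding vertex if every facet of `del_Δ(v)` is a facet
of `Δ`. -/
def IsSheddingVertex {n : ℕ} (Δ : Set (Finset (Fin n))) (v : Fin n) : Prop :=
  {v} ∈ Δ ∧ ∀ F, IsFacet (delC Δ v) F → IsFacet Δ F

/-- `Δ` is a simplex: it has a unique maximal face containing all faces. -/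
def IsSimplexC {n : ℕ} (Δ : Set (Finset (Fin n))) : Prop :=
  ∃ F ∈ Δ, ∀ G ∈ Δ, G ⊆ F

/-- Vertex decomposability, defined recursively. -/
inductive IsVertexDecomposable {n : ℕ} : Set (Finset (Fin n)) → Prop
  | simplex {Δ : Set (Finset (Fin n))} (h : IsComplex Δ) (hs : IsSimplexC Δ) :
      IsVertexDecomposable Δ
  | step {Δ : Set (Finset (Fin n))} (h : IsComplex Δ) (v : Fin n)
      (hv : IsSheddingVertex Δ v)
      (h1 : IsVertexDecomposable (linkC Δ v)) (h2 : IsVertexDecomposable (delC Δ v)) :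
      IsVertexDecomposable Δ

/-- The independence complex of a graph. -/
def indepComplex {n : ℕ} (G : SimpleGraph (Fin n)) : Set (Finset (Fin n)) :=
  {A | ∀ u ∈ A, ∀ v ∈ A, ¬ G.Adj u v}

/-- The independence complex of the graph `G ∖ S` obtained by deleting the vertices in
`S` (its faces are the independent sets of `G` avoiding `S`). -/
def indepComplexDel {n : ℕ} (G : SimpleGraph (Fin n)) (S : Set (Fin n)) :
    Set (Finset (Fin n)) :=
  {A | (∀ x ∈ A, x ∉ S) ∧ ∀ u ∈ A, ∀ v ∈ A, ¬ G.Adj u v}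

lemma exists_pendant {n : ℕ} (H : SimpleGraph (Fin n)) (hH : H.IsAcyclic)
    (a b : Fin n) (hab : H.Adj a b) : ∃ v w, H.Adj v w ∧ ∀ u, H.Adj v u → u = w := by
  classical
  haveI : Nonempty (Fin n) := ⟨a⟩
  obtain ⟨u, v, p, hp, hmax⟩ := SimpleGraph.Walk.exists_isPath_forall_isPath_length_le_length H
  have h1 : 1 ≤ p.length := by
    have := hmax a b (SimpleGraph.Walk.cons hab SimpleGraph.Walk.nil) (by
      simp [SimpleGraph.Walk.cons_isPath_iff, hab.ne])
    simpa using this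
  have hnil : ¬ p.Nil := by
    intro h
    have := SimpleGraph.Walk.nil_iff_length_eq.mp h
    omega
  refine ⟨u, p.snd, p.adj_snd hnil, fun x hx => ?_⟩
  by_cases hs : x ∈ p.support
  · exact hH.eq_snd_of_adj_start hp hx hs
  · have := hmax _ _ (SimpleGraph.Walk.cons hx.symm p) (by
      simp [SimpleGraph.Walk.cons_isPath_iff, hs, hp])
    simp at this

lemma isComplex_del {n : ℕ} (G : SimpleGraph (Fin n)) (S : Set (Fin n)) :
    IsComplex (indepComplexDel G S) := by
  refine ⟨⟨∅, by simp [indepComplexDel]⟩, fun F hF A hA => ?_⟩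
  exact ⟨fun x hx => hF.1 x (hA hx), fun u hu v hv => hF.2 u (hA hu) v (hA hv)⟩

lemma del_del {n : ℕ} (G : SimpleGraph (Fin n)) (S : Set (Fin n)) (w : Fin n) :
    delC (indepComplexDel G S) w = indepComplexDel G (S ∪ {w}) := by
  ext A
  simp only [delC, indepComplexDel, Set.mem_setOf_eq, Set.mem_union, Set.mem_singleton_iff]
  grind

lemma link_del {n : ℕ} (G : SimpleGraph (Fin n)) (S : Set (Fin n)) (w : Fin n) (hw : w ∉ S) :
    linkC (indepComplexDel G S) w = indepComplexDel G (S ∪ (G.neighborSet w ∪ {w})) := by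
  ext A
  have hi : ¬ G.Adj w w := G.loopless.irrefl w
  have hs : ∀ x, G.Adj x w ↔ G.Adj w x := fun x => G.adj_comm x w
  simp only [linkC, indepComplexDel, Set.mem_setOf_eq, Set.mem_union, Set.mem_singleton_iff,
    SimpleGraph.mem_neighborSet, Finset.mem_insert]
  grind

lemma shedding_del {n : ℕ} (G : SimpleGraph (Fin n)) (S : Set (Fin n)) (v w : Fin n)
    (hv : v ∉ S) (hw : w ∉ S) (hvw : G.Adj v w) (h : ∀ u, u ∉ S → G.Adj v u → u = w) :
    IsSheddingVertex (indepComplexDel G S) w := by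
  classical
  refine ⟨⟨by simpa using hw, by simp⟩, fun F hF => ⟨hF.1.1, fun A hA hFA => ?_⟩⟩
  by_cases hwA : w ∈ A
  · exfalso
    have hvA : v ∉ A := fun hvA => hA.2 v hvA w hwA hvw
    have hvF : v ∉ F := fun hx => hvA (hFA hx)
    have hwF : w ∉ F := hF.1.2
    have hins : insert v F ∈ delC (indepComplexDel G S) w := by
      have h1 := hF.1.1.1
      have h2 := hF.1.1.2
      have hi : ¬ G.Adj v v := G.loopless.irrefl v
      have hs : ∀ x, G.Adj x v ↔ G.Adj v x := fun x => G.adj_comm x v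
      have hne := hvw.ne
      simp only [delC, indepComplexDel, Set.mem_setOf_eq, Finset.mem_insert]
      grind
    have := hF.2 _ hins (Finset.subset_insert v F)
    exact hvF (this ▸ Finset.mem_insert_self v F)
  · exact hF.2 A ⟨hA, hwA⟩ hFA

lemma vd_del {n : ℕ} (G : SimpleGraph (Fin n)) (hG : G.IsAcyclic) :
    ∀ (k : ℕ) (S : Set (Fin n)), Sᶜ.ncard ≤ k →
      IsVertexDecomposable (indepComplexDel G S) := by
  classical
  intro k
  induction k with
  | zero =>
    intro S hS
    have hS' : Sᶜ = ∅ := (Set.ncard_eq_zero (Set.toFinite _)).mp (by omega)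
    refine .simplex (isComplex_del G S) ⟨∅, by simp [indepComplexDel], fun A hA x hx => ?_⟩
    have : x ∈ Sᶜ := hA.1 x hx
    simp [hS'] at this
  | succ k ih =>
    intro S hS
    by_cases he : ∃ a b, a ∉ S ∧ b ∉ S ∧ G.Adj a b
    · obtain ⟨a, b, ha, hb, hab⟩ := he
      let H : SimpleGraph (Fin n) :=
        { Adj := fun x y => x ∉ S ∧ y ∉ S ∧ G.Adj x y
          symm := ⟨fun x y h => ⟨h.2.1, h.1, h.2.2.symm⟩⟩
          loopless := ⟨fun x h => G.loopless.irrefl x h.2.2⟩ }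
      have hHG : H ≤ G := fun x y h => h.2.2
      obtain ⟨v, w, hvw, hu⟩ := exists_pendant H (hG.anti hHG) a b ⟨ha, hb, hab⟩
      have hw : w ∉ S := hvw.2.1
      have hlt : ∀ T : Set (Fin n), S ⊆ T → w ∈ T → Tᶜ.ncard ≤ k := by
        intro T hST hwT
        have : Tᶜ.ncard < Sᶜ.ncard := by
          apply Set.ncard_lt_ncard _ (Set.toFinite _)
          exact ⟨Set.compl_subset_compl.mpr hST, fun hh => (hh hw) hwT⟩
        omega
      refine .step (isComplex_del G S) w
        (shedding_del G S v w hvw.1 hw hvw.2.2 fun u h1 h2 => hu u ⟨hvw.1, h1, h2⟩) ?_ ?_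
      · rw [link_del G S w hw]
        exact ih _ (hlt _ Set.subset_union_left (by simp))
      · rw [del_del]
        exact ih _ (hlt _ Set.subset_union_left (by simp))
    · refine .simplex (isComplex_del G S) ⟨Finset.univ.filter (· ∉ S), ?_, fun A hA x hx => ?_⟩
      · refine ⟨by simp, fun u hu v hv h => he ⟨u, v, ?_, ?_, h⟩⟩
        · simpa using hu
        · simpa using hv
      · simpa using hA.1 x hx

lemma indep_eq {n : ℕ} (G : SimpleGraph (Fin n)) : indepComplex G = indepComplexDel G ∅ := by
  ext A
  simp [indepComplex, indepComplexDel]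

/-- Let `G` be a forest with at least one edge, `v` a pendant vertex of `G` and `w`
the neighbor of `v`. Then `w` is a shedding vertex of the independence complex `Δ_G`,
`link_(Δ_G)(w) = Δ_(G ∖ N_G[w])`, `del_(Δ_G)(w) = Δ_(G ∖ w)`, and `Δ_G` is vertex
decomposable. -/
theorem statement_19 (n : ℕ) (G : SimpleGraph (Fin n)) (hforest : G.IsAcyclic)
    (hedge : ∃ a b : Fin n, G.Adj a b) (v : Fin n) (hpendant : ∃! u, G.Adj v u)
    (w : Fin n) (hw : G.Adj v w) :
    IsSheddingVertex (indepComplex G) w ∧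
    linkC (indepComplex G) w = indepComplexDel G (G.neighborSet w ∪ {w}) ∧
    delC (indepComplex G) w = indepComplexDel G {w} ∧
    IsVertexDecomposable (indepComplex G) := by
  rw [indep_eq]
  refine ⟨shedding_del G ∅ v w (by simp) (by simp) hw fun u _ hu => hpendant.unique hu hw, ?_, ?_,
    vd_del G hforest _ ∅ le_rfl⟩
  · rw [link_del G ∅ w (by simp), Set.empty_union]
  · rw [del_del, Set.empty_union]


end Paper
end
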